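/- Let d ≥ 1, let m > 2d be a real number, and let χ : ℝ^{2d} → ℝ^{2d} be a measurable bijection with measurable inverse which preserves Lebesgue measure. Let T be a continuous linear operator from the Schwartz space 𝒮(ℝ^d) to the space of tempered distributions 𝒮′(ℝ^d), and let A ≥ 0 be such that |⟨T(π(z)g), π(w)g⟩| ≤ A·(1+|w−χ(z)|²)^{−m/2} for all z, w ∈ ℝ^{2d}. Then there exists a constant C > 0 depending only on m and d such that for every p ∈ [1,∞] and every f ∈ 𝒮(ℝ^d): ‖V_g(Tf)‖_{L^p(ℝ^{2d})} ≤ C·A·‖V_g f‖_{L^p(ℝ^{2d})}. -/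

import Mathlib

open MeasureTheory Complex Real
open scoped ENNReal RealInnerProductSpace

noncomputable section

abbrev E (d : ℕ) : Type := EuclideanSpace ℝ (Fin d)

/-- Phase space `ℝ^{2d} = ℝ^d × ℝ^d`. -/
abbrev P (d : ℕ) : Type := E d × E d

/-- The Schwartz space `𝒮(ℝ^d)` of complex valued functions. -/
abbrev SCH (d : ℕ) : Type := SchwartzMap (E d) ℂ

/-- Square of the Euclidean norm on the phase space `ℝ^{2d}`. -/
def ensq {d : ℕ} (z : P d) : ℝ := ‖z.1‖ ^ 2 + ‖z.2‖ ^ 2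


/-- A linear functional dominated by `‖J x‖` factors through `J` as a continuous functional. -/
theorem exists_continuousLinearMap_comp_eq {X Y : Type*} [AddCommGroup X] [Module ℂ X]
    [NormedAddCommGroup Y] [NormedSpace ℂ Y] (J : X →ₗ[ℂ] Y) (L : X →ₗ[ℂ] ℂ) (C : ℝ)
    (h : ∀ x, ‖L x‖ ≤ C * ‖J x‖) : ∃ Λ : Y →L[ℂ] ℂ, ∀ x, Λ (J x) = L x := by
  have hker : LinearMap.ker J ≤ LinearMap.ker L := by
    intro x hx
    have := h x
    rw [LinearMap.mem_ker.1 hx, norm_zero, mul_zero] at this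
    exact norm_le_zero_iff.1 this
  let l₀ : LinearMap.range J →ₗ[ℂ] ℂ :=
    ((LinearMap.ker J).liftQ L hker) ∘ₗ J.quotKerEquivRange.symm.toLinearMap
  have hl₀ : ∀ x (hx : J x ∈ LinearMap.range J), l₀ ⟨J x, hx⟩ = L x := by
    intro x hx
    simp [l₀, LinearMap.quotKerEquivRange_symm_apply_image]
  let l : LinearMap.range J →L[ℂ] ℂ := l₀.mkContinuous C (by
    rintro ⟨y, hy⟩
    obtain ⟨x, rfl⟩ := LinearMap.mem_range.1 hy
    rw [hl₀]
    exact h x)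
  obtain ⟨Λ, hΛ, -⟩ := exists_extension_norm_eq (LinearMap.range J) l
  exact ⟨Λ, fun x => (hΛ ⟨J x, x, rfl⟩).trans (hl₀ x ⟨x, rfl⟩)⟩

/-- A functional dominated by finitely many continuous linear maps into spaces of bounded continuous
functions commutes with the integral of a continuous family, as soon as the values of these maps
do. -/
theorem apply_eq_integral_of_bound {X V ι Z : Type*} [Fintype ι] [TopologicalSpace V]
    {Y : ι → Type*}
    [AddCommGroup X] [Module ℂ X] [TopologicalSpace X]
    [∀ i, NormedAddCommGroup (Y i)] [∀ i, NormedSpace ℂ (Y i)] [∀ i, CompleteSpace (Y i)]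
    [TopologicalSpace Z] [SecondCountableTopology Z] [MeasurableSpace Z]
    [OpensMeasurableSpace Z] {μ : Measure Z}
    (J : ∀ i, X →L[ℂ] BoundedContinuousFunction V (Y i)) (L : X →ₗ[ℂ] ℂ)
    {C : ℝ} (hL : ∀ x, ‖L x‖ ≤ C * ‖fun i => J i x‖)
    {G : Z → X} (hG : Continuous G) {v : Z → ℂ} (hv : AEStronglyMeasurable v μ)
    (hintg : ∀ i, Integrable (fun z => ‖v z‖ * ‖J i (G z)‖) μ) {f : X}
    (hf : ∀ i x, J i f x = ∫ z, v z • J i (G z) x ∂μ) : L f = ∫ z, v z * L (G z) ∂μ := by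
  obtain ⟨Λ, hΛ⟩ := exists_continuousLinearMap_comp_eq
    (LinearMap.pi fun i => (J i : X →ₗ[ℂ] BoundedContinuousFunction V (Y i))) L C hL
  set K : X → ∀ i, BoundedContinuousFunction V (Y i) := fun x i => J i x with hK
  have hcont : Continuous fun z => K (G z) :=
    continuous_pi fun i => (J i).continuous.comp hG
  have hInt : Integrable (fun z => v z • K (G z)) μ := by
    refine (integrable_finsetSum Finset.univ fun i _ => hintg i).mono'
      (hv.smul hcont.aestronglyMeasurable) (.of_forall fun z => ?_)
    rw [norm_smul, ← Finset.mul_sum]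
    gcongr
    rw [pi_norm_le_iff_of_nonneg (Finset.sum_nonneg fun i _ => norm_nonneg _)]
    intro i
    exact Finset.single_le_sum (f := fun i => ‖J i (G z)‖)
      (fun i _ => norm_nonneg _) (Finset.mem_univ i)
  have hJf : K f = ∫ z, v z • K (G z) ∂μ := by
    funext i
    ext1 x
    exact (hf i x).trans (((BoundedContinuousFunction.evalCLM ℂ x).comp
      (ContinuousLinearMap.proj (R := ℂ)
        (φ := fun i => BoundedContinuousFunction V (Y i)) i)).integral_comp_comm hInt)
  calc L f = Λ (K f) := (hΛ f).symm
    _ = ∫ z, Λ (v z • K (G z)) ∂μ := by rw [hJf]; exact (Λ.integral_comp_comm hInt).symm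
    _ = ∫ z, v z * L (G z) ∂μ := by
      congr 1 with z
      rw [map_smul, smul_eq_mul]
      exact congrArg _ (hΛ (G z))

section SchwartzIntegral

variable {V : Type*} [NormedAddCommGroup V] [NormedSpace ℝ V]

/-- The weighted derivative `x ↦ ‖x‖ ^ k • D ^ n f x` of a Schwartz function, as a bounded
continuous function depending continuously on `f`. -/
def weightedDerivCLM (V : Type*) [NormedAddCommGroup V] [NormedSpace ℝ V] (k n : ℕ) :
    SchwartzMap V ℂ →L[ℂ] BoundedContinuousFunction V (V [×n]→L[ℝ] ℂ) :=
  SchwartzMap.mkCLMtoNormedSpace (𝕜 := ℂ) (D := V) (E := ℂ)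
    (fun f : SchwartzMap V ℂ => BoundedContinuousFunction.ofNormedAddCommGroup
      (fun x => ‖x‖ ^ k • iteratedFDeriv ℝ n f x)
      ((continuous_norm.pow k).smul
        ((f.smooth ⊤).continuous_iteratedFDeriv (m := n) (by exact_mod_cast le_top)))
      (SchwartzMap.seminorm ℂ k n f)
      (fun x => by
        rw [norm_smul, norm_pow, norm_norm]
        exact SchwartzMap.le_seminorm ℂ k n f x))
    (fun f g => by
      ext1 x
      have := iteratedFDeriv_add_apply (𝕜 := ℝ) (i := n) (x := x)
        ((f.smooth n).contDiffAt) ((g.smooth n).contDiffAt)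
      simp only [BoundedContinuousFunction.coe_ofNormedAddCommGroup,
        BoundedContinuousFunction.coe_add, Pi.add_apply]
      rw [← smul_add, ← this]
      rfl)
    (fun a f => by
      ext1 x
      have := iteratedFDeriv_const_smul_apply (𝕜 := ℝ) (i := n) (x := x) (a := a)
        ((f.smooth n).contDiffAt)
      simp only [BoundedContinuousFunction.coe_ofNormedAddCommGroup,
        BoundedContinuousFunction.coe_smul, RingHom.id_apply]
      rw [smul_comm a, ← this]
      rfl)
    ⟨{(k, n)}, 1, zero_le_one, fun f => by
      rw [one_mul, Finset.sup_singleton]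
      exact BoundedContinuousFunction.norm_ofNormedAddCommGroup_le _ (apply_nonneg _ _) _⟩

theorem weightedDerivCLM_apply (k n : ℕ) (f : SchwartzMap V ℂ) (x : V) :
    weightedDerivCLM V k n f x = ‖x‖ ^ k • iteratedFDeriv ℝ n f x := rfl

theorem norm_weightedDerivCLM (k n : ℕ) (f : SchwartzMap V ℂ) :
    ‖weightedDerivCLM V k n f‖ = SchwartzMap.seminorm ℂ k n f := by
  apply le_antisymm
  · exact BoundedContinuousFunction.norm_ofNormedAddCommGroup_le _ (apply_nonneg _ _)
      (fun x => by
        rw [norm_smul, norm_pow, norm_norm]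
        exact SchwartzMap.le_seminorm ℂ k n f x)
  · refine SchwartzMap.seminorm_le_bound ℂ k n f (norm_nonneg (weightedDerivCLM V k n f)) fun x => ?_
    have := (weightedDerivCLM V k n f).norm_coe_le_norm x
    rwa [weightedDerivCLM_apply, norm_smul, norm_pow, norm_norm] at this

theorem continuous_iteratedFDeriv_eval {Z : Type*} [TopologicalSpace Z]
    {G : Z → SchwartzMap V ℂ} (hG : Continuous G) (n : ℕ)
    (x : V) : Continuous fun z => iteratedFDeriv ℝ n (G z) x := by
  have h := (BoundedContinuousFunction.evalCLM ℂ x).continuous.comp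
    ((weightedDerivCLM V 0 n).continuous.comp hG)
  refine h.congr fun z => ?_
  simp [weightedDerivCLM_apply]

variable {Z : Type*} [TopologicalSpace Z] [SecondCountableTopology Z] [MeasurableSpace Z]
  [OpensMeasurableSpace Z] {μ : Measure Z}

/-- Differentiation under the integral sign for a continuous family of Schwartz functions. -/
theorem iteratedFDeriv_eq_integral {G : Z → SchwartzMap V ℂ} (hG : Continuous G)
    {v : Z → ℂ} (hv : AEStronglyMeasurable v μ)
    (hintg : ∀ n, Integrable (fun z => ‖v z‖ * SchwartzMap.seminorm ℂ 0 n (G z)) μ)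
    {f : SchwartzMap V ℂ} (hf : ∀ x, f x = ∫ z, v z • G z x ∂μ) (n : ℕ) (x : V) :
    iteratedFDeriv ℝ n f x = ∫ z, v z • iteratedFDeriv ℝ n (G z) x ∂μ := by
  have hmeas : ∀ n x, AEStronglyMeasurable (fun z => v z • iteratedFDeriv ℝ n (G z) x) μ :=
    fun n x => hv.smul (continuous_iteratedFDeriv_eval hG n x).aestronglyMeasurable
  have hInt : ∀ n x, Integrable (fun z => v z • iteratedFDeriv ℝ n (G z) x) μ := by
    intro n x
    refine (hintg n).mono' (hmeas n x) (.of_forall fun z => ?_)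
    rw [norm_smul]
    gcongr
    exact SchwartzMap.norm_iteratedFDeriv_le_seminorm ℂ (G z) n x
  induction n generalizing x with
  | zero =>
    ext m
    have h := ContinuousMultilinearMap.apply ℝ (fun _ : Fin 0 => V) ℂ m
    rw [ContinuousMultilinearMap.integral_apply (hInt 0 x)]
    simp [hf x]
  | succ n ih =>
    set e := continuousMultilinearCurryLeftEquiv ℝ (fun _ : Fin (n + 1) => V) ℂ with he
    have hd : ∀ z y, fderiv ℝ (iteratedFDeriv ℝ n (G z)) y
        = e (iteratedFDeriv ℝ (n + 1) (G z) y) := by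
      intro z y
      rw [iteratedFDeriv_succ_eq_comp_left]
      simp [he]
    have key : HasFDerivAt (fun y => ∫ z, v z • iteratedFDeriv ℝ n (G z) y ∂μ)
        (∫ z, v z • fderiv ℝ (iteratedFDeriv ℝ n (G z)) x ∂μ) x := by
      refine hasFDerivAt_integral_of_dominated_of_fderiv_le
        (F' := fun y z => v z • fderiv ℝ (iteratedFDeriv ℝ n (G z)) y)
        (bound := fun z => ‖v z‖ * SchwartzMap.seminorm ℂ 0 (n + 1) (G z))
        Filter.univ_mem (.of_forall fun y => hmeas n y) (hInt n x) ?_ ?_ (hintg (n + 1)) ?_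
      · simp only [hd]
        exact hv.smul (e.continuous.comp
          (continuous_iteratedFDeriv_eval hG (n + 1) x)).aestronglyMeasurable
      · refine .of_forall fun z y _ => ?_
        rw [norm_smul, norm_fderiv_iteratedFDeriv]
        gcongr
        exact SchwartzMap.norm_iteratedFDeriv_le_seminorm ℂ (G z) (n + 1) y
      · refine .of_forall fun z y _ => ?_
        have : DifferentiableAt ℝ (iteratedFDeriv ℝ n (G z)) y :=
          ((G z).smooth ⊤).differentiable_iteratedFDeriv (m := n)
            (by exact_mod_cast WithTop.coe_lt_top n) y
        exact this.hasFDerivAt.const_smul (v z)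
    have hfun : iteratedFDeriv ℝ n f = fun y => ∫ z, v z • iteratedFDeriv ℝ n (G z) y ∂μ :=
      funext ih
    rw [iteratedFDeriv_succ_eq_comp_left, hfun, Function.comp_apply, key.fderiv]
    simp only [hd]
    have h1 : ∀ z, v z • e (iteratedFDeriv ℝ (n + 1) (G z) x)
        = e (v z • iteratedFDeriv ℝ (n + 1) (G z) x) := fun z => by
      ext; rfl
    simp only [h1]
    rw [← he]
    rw [e.symm_apply_eq]
    exact ContinuousLinearMap.integral_comp_comm (𝕜 := ℝ) (E := V [×(n + 1)]→L[ℝ] ℂ)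
      (Fₗ := V →L[ℝ] (V [×n]→L[ℝ] ℂ)) (e : _ →L[ℝ] _) (hInt (n + 1) x)

/-- A continuous functional on the Schwartz space commutes with the integral of a continuous
family of Schwartz functions. -/
theorem SchwartzMap.apply_eq_integral {G : Z → SchwartzMap V ℂ} (hG : Continuous G)
    {v : Z → ℂ} (hv : AEStronglyMeasurable v μ)
    (hintg : ∀ k n, Integrable (fun z => ‖v z‖ * SchwartzMap.seminorm ℂ k n (G z)) μ)
    {f : SchwartzMap V ℂ} (hf : ∀ x, f x = ∫ z, v z • G z x ∂μ)
    (L : SchwartzMap V ℂ →L[ℂ] ℂ) : L f = ∫ z, v z * L (G z) ∂μ := by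
  have hderiv := iteratedFDeriv_eq_integral hG hv (hintg 0) hf
  obtain ⟨s, C, -, hC⟩ := Seminorm.bound_of_continuous (schwartz_withSeminorms ℂ V ℂ)
    ((normSeminorm ℂ ℂ).comp L.toLinearMap) (continuous_norm.comp L.continuous)
  refine apply_eq_integral_of_bound (ι := s)
    (Y := fun i => V [×i.1.2]→L[ℝ] ℂ)
    (fun i => weightedDerivCLM V i.1.1 i.1.2) (L : SchwartzMap V ℂ →ₗ[ℂ] ℂ) (C := C) ?_ hG hv ?_ ?_
  · intro h
    refine (hC h).trans ?_
    rw [smul_apply, NNReal.smul_def, smul_eq_mul]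
    gcongr
    refine Seminorm.finset_sup_apply_le (norm_nonneg _) fun i hi => ?_
    refine le_trans (le_of_eq ?_)
      (norm_le_pi_norm (fun i : s => weightedDerivCLM V i.1.1 i.1.2 h) ⟨i, hi⟩)
    exact (norm_weightedDerivCLM i.1 i.2 h).symm
  · intro i
    simpa only [norm_weightedDerivCLM] using hintg i.1.1 i.1.2
  · intro i x
    change ‖x‖ ^ i.1.1 • iteratedFDeriv ℝ i.1.2 f x
      = ∫ z, v z • (‖x‖ ^ i.1.1 • iteratedFDeriv ℝ i.1.2 (G z) x) ∂μ
    simp only [smul_comm (v _)]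
    rw [integral_smul, hderiv]

end SchwartzIntegral

theorem iteratedDeriv_cexp_I_mul (n : ℕ) :
    iteratedDeriv n (fun t : ℝ => Complex.exp (I * t)) =
      fun t : ℝ => I ^ n * Complex.exp (I * t) := by
  induction n with
  | zero => simp
  | succ n ih =>
    funext t
    rw [iteratedDeriv_succ, ih]
    have h : HasDerivAt (fun t : ℝ => Complex.exp (I * t)) (Complex.exp (I * t) * (I * 1)) t :=
      ((Complex.ofRealCLM.hasDerivAt (x := t)).const_mul I).cexp
    rw [(h.const_mul (I ^ n)).deriv]
    ring

theorem hasTemperateGrowth_cexp_I_mul :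
    Function.HasTemperateGrowth (fun t : ℝ => Complex.exp (I * t)) := by
  refine ⟨?_, fun n => ⟨0, 1, fun t => ?_⟩⟩
  · exact (contDiff_const.mul Complex.ofRealCLM.contDiff).cexp
  · rw [norm_iteratedFDeriv_eq_norm_iteratedDeriv, iteratedDeriv_cexp_I_mul]
    simp [mul_comm I, Complex.norm_exp_ofReal_mul_I]

theorem hasTemperateGrowth_cexp_I_mul_inner (d : ℕ) :
    Function.HasTemperateGrowth
      (fun q : P d × E d => Complex.exp (I * ((⟪q.2, q.1.2⟫ : ℝ) : ℂ))) := by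
  have h1 : Function.HasTemperateGrowth (fun q : P d × E d => q.2) :=
    (ContinuousLinearMap.snd ℝ (P d) (E d)).hasTemperateGrowth
  have h2 : Function.HasTemperateGrowth (fun q : P d × E d => q.1.2) :=
    ((ContinuousLinearMap.snd ℝ (E d) (E d)).comp
      (ContinuousLinearMap.fst ℝ (P d) (E d))).hasTemperateGrowth
  have h3 : Function.HasTemperateGrowth (fun q : P d × E d => (⟪q.2, q.1.2⟫ : ℝ)) :=
    (innerSL ℝ (E := E d)).bilinear_hasTemperateGrowth h1 h2
  exact hasTemperateGrowth_cexp_I_mul.comp h3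

/-- The linear map `((x, ξ), y) ↦ y - x`. -/
def shiftCLM (d : ℕ) : P d × E d →L[ℝ] E d :=
  ContinuousLinearMap.snd ℝ (P d) (E d) -
    (ContinuousLinearMap.fst ℝ (E d) (E d)).comp (ContinuousLinearMap.fst ℝ (P d) (E d))

theorem shiftCLM_apply {d : ℕ} (q : P d × E d) : shiftCLM d q = q.2 - q.1.1 := rfl

/-- The wave packet `e^{i y·ξ} g (y - x)` as a function of `((x, ξ), y)`. -/
def wavePacket {d : ℕ} (g : SCH d) (q : P d × E d) : ℂ :=
  Complex.exp (I * ((⟪q.2, q.1.2⟫ : ℝ) : ℂ)) * g (q.2 - q.1.1)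

theorem contDiff_wavePacket {d : ℕ} (g : SCH d) : ContDiff ℝ (⊤ : ℕ∞) (wavePacket g) :=
  (hasTemperateGrowth_cexp_I_mul_inner d).1.mul ((g.smooth ⊤).comp (shiftCLM d).contDiff)

theorem SchwartzMap.exists_one_add_norm_pow_mul_le {V : Type*} [NormedAddCommGroup V]
    [NormedSpace ℝ V] (g : SchwartzMap V ℂ) (k n : ℕ) :
    ∃ C, 0 ≤ C ∧ ∀ i ≤ n, ∀ x, (1 + ‖x‖) ^ k * ‖iteratedFDeriv ℝ i g x‖ ≤ C :=
  ⟨_, by positivity, fun _ hi x =>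
    SchwartzMap.one_add_le_sup_seminorm_apply (𝕜 := ℂ) (m := (k, n)) le_rfl hi g x⟩

theorem one_add_norm_le_mul {V : Type*} [NormedAddCommGroup V] (a b : V) :
    1 + ‖a‖ ≤ (1 + ‖b‖) * (1 + ‖a - b‖) := by
  have : ‖a‖ ≤ ‖b‖ + ‖a - b‖ := by simpa using norm_add_le b (a - b)
  nlinarith [norm_nonneg b, norm_nonneg (a - b)]

theorem exists_norm_iteratedFDeriv_wavePacket_le {d : ℕ} (g : SCH d) (k n : ℕ) :
    ∃ C M, 0 ≤ C ∧ ∀ (z : P d) (y : E d),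
      ‖y‖ ^ k * ‖iteratedFDeriv ℝ n (wavePacket g) (z, y)‖ ≤ C * (1 + ‖z‖) ^ (M : ℕ) := by
  obtain ⟨K, C₁, hC₁, h₁⟩ :=
    (hasTemperateGrowth_cexp_I_mul_inner d).norm_iteratedFDeriv_le_uniform n
  obtain ⟨C₂, hC₂, h₂⟩ := g.exists_one_add_norm_pow_mul_le (k + K) n
  set B := (1 + ‖shiftCLM d‖) ^ n with hB
  refine ⟨∑ i ∈ Finset.range (n + 1), n.choose i * C₁ * (C₂ * B), 2 * (k + K),
    by positivity, fun z y => ?_⟩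
  have hq : 1 + ‖(z, y)‖ ≤ (1 + ‖z‖) ^ 2 * (1 + ‖y - z.1‖) := by
    have h1 := one_add_norm_le_mul y z.1
    have h2 : ‖z.1‖ ≤ ‖z‖ := norm_fst_le z
    have h3 := norm_nonneg (y - z.1)
    have h4 := norm_nonneg z
    have hy : 1 + ‖y‖ ≤ (1 + ‖z‖) ^ 2 * (1 + ‖y - z.1‖) := by
      refine h1.trans ?_
      gcongr
      nlinarith
    have hz : 1 + ‖z‖ ≤ (1 + ‖z‖) ^ 2 * (1 + ‖y - z.1‖) := by nlinarith [mul_nonneg h4 h3]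
    rcases max_choice ‖z‖ ‖y‖ with h | h <;> rw [Prod.norm_mk, h] <;> assumption
  have hg : ∀ i ≤ n, (1 + ‖y - z.1‖) ^ (k + K) *
      ‖iteratedFDeriv ℝ i (fun q : P d × E d => g (q.2 - q.1.1)) (z, y)‖ ≤ C₂ * B := by
    intro i hi
    have := (shiftCLM d).iteratedFDeriv_comp_right (f := g) (g.smooth ⊤) (z, y) (i := i)
      (by exact_mod_cast le_top)
    have h3 : ‖iteratedFDeriv ℝ i (fun q : P d × E d => g (q.2 - q.1.1)) (z, y)‖
        ≤ ‖iteratedFDeriv ℝ i g (y - z.1)‖ * B := by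
      change ‖iteratedFDeriv ℝ i (g ∘ shiftCLM d) (z, y)‖ ≤ _
      rw [this]
      refine (ContinuousMultilinearMap.norm_compContinuousLinearMap_le _ _).trans ?_
      rw [Finset.prod_const, Finset.card_univ, Fintype.card_fin, shiftCLM_apply]
      gcongr
      calc ‖shiftCLM d‖ ^ i ≤ (1 + ‖shiftCLM d‖) ^ i := by gcongr; linarith
        _ ≤ B := pow_le_pow_right₀ (by linarith [norm_nonneg (shiftCLM d)]) hi
    calc _ ≤ (1 + ‖y - z.1‖) ^ (k + K) * (‖iteratedFDeriv ℝ i g (y - z.1)‖ * B) := by gcongr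
      _ = ((1 + ‖y - z.1‖) ^ (k + K) * ‖iteratedFDeriv ℝ i g (y - z.1)‖) * B := by ring
      _ ≤ C₂ * B := by gcongr; exact h₂ i hi _
  have hleib := norm_iteratedFDeriv_mul_le (hasTemperateGrowth_cexp_I_mul_inner d).1
    ((g.smooth ⊤).comp (shiftCLM d).contDiff) (z, y) (n := n) (by exact_mod_cast le_top)
  have hyq : ‖y‖ ≤ 1 + ‖(z, y)‖ := by linarith [norm_snd_le (z, y)]
  calc ‖y‖ ^ k * ‖iteratedFDeriv ℝ n (wavePacket g) (z, y)‖
      ≤ (1 + ‖(z, y)‖) ^ k * ∑ i ∈ Finset.range (n + 1), (n.choose i : ℝ) *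
          (C₁ * (1 + ‖(z, y)‖) ^ K) *
          ‖iteratedFDeriv ℝ (n - i) (fun q : P d × E d => g (q.2 - q.1.1)) (z, y)‖ := by
        gcongr
        refine hleib.trans ?_
        gcongr with i hi
        · exact h₁ i (by simpa [Nat.lt_succ_iff] using hi) _
        · exact le_rfl
    _ = ∑ i ∈ Finset.range (n + 1), (n.choose i : ℝ) * C₁ * ((1 + ‖(z, y)‖) ^ (k + K) *
          ‖iteratedFDeriv ℝ (n - i) (fun q : P d × E d => g (q.2 - q.1.1)) (z, y)‖) := by
        rw [Finset.mul_sum]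
        exact Finset.sum_congr rfl fun i _ => by ring
    _ ≤ ∑ i ∈ Finset.range (n + 1), (n.choose i : ℝ) * C₁ *
          (C₂ * B * (1 + ‖z‖) ^ (2 * (k + K))) := by
        refine Finset.sum_le_sum fun i hi => mul_le_mul_of_nonneg_left ?_ (by positivity)
        calc _ ≤ ((1 + ‖z‖) ^ 2 * (1 + ‖y - z.1‖)) ^ (k + K) *
            ‖iteratedFDeriv ℝ (n - i) (fun q : P d × E d => g (q.2 - q.1.1)) (z, y)‖ := by
              gcongr
          _ = ((1 + ‖y - z.1‖) ^ (k + K) *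
            ‖iteratedFDeriv ℝ (n - i) (fun q : P d × E d => g (q.2 - q.1.1)) (z, y)‖)
              * (1 + ‖z‖) ^ (2 * (k + K)) := by rw [mul_pow, ← pow_mul]; ring
          _ ≤ _ := mul_le_mul_of_nonneg_right (hg _ (Nat.sub_le _ _)) (by positivity)
    _ = _ := by
        rw [Finset.sum_mul]
        exact Finset.sum_congr rfl fun i _ => by ring

theorem iteratedFDeriv_wavePacket_right {d : ℕ} (g : SCH d) (n : ℕ) (z : P d) (y : E d) :
    iteratedFDeriv ℝ n (fun y => wavePacket g (z, y)) y =
      (iteratedFDeriv ℝ n (wavePacket g) (z, y)).compContinuousLinearMap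
        (fun _ => ContinuousLinearMap.inr ℝ (P d) (E d)) := by
  have h := (ContinuousLinearMap.inr ℝ (P d) (E d)).iteratedFDeriv_comp_right
    (f := fun q => wavePacket g ((z, 0) + q))
    ((contDiff_wavePacket g).comp (contDiff_const.add contDiff_id)) y (i := n)
    (by exact_mod_cast le_top)
  rw [iteratedFDeriv_comp_add_left] at h
  have e : ∀ y : E d, (z, (0 : E d)) + ContinuousLinearMap.inr ℝ (P d) (E d) y = (z, y) :=
    fun y => by simp
  simpa only [Function.comp_def, e] using h

theorem norm_compContinuousLinearMap_inr_le {d n : ℕ} (T : (P d × E d) [×n]→L[ℝ] ℂ) :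
    ‖T.compContinuousLinearMap (fun _ => ContinuousLinearMap.inr ℝ (P d) (E d))‖ ≤ ‖T‖ := by
  refine (ContinuousMultilinearMap.norm_compContinuousLinearMap_le _ _).trans ?_
  rw [Finset.prod_const]
  exact mul_le_of_le_one_right (norm_nonneg _)
    (pow_le_one₀ (norm_nonneg _) (ContinuousLinearMap.norm_inr_le_one ℝ (P d) (E d)))

theorem exists_seminorm_wavePacket_le {d : ℕ} (g : SCH d) {G : P d → SCH d}
    (hG : ∀ z y, G z y = wavePacket g (z, y)) (k n : ℕ) :
    ∃ C M, 0 ≤ C ∧ ∀ z, SchwartzMap.seminorm ℂ k n (G z) ≤ C * (1 + ‖z‖) ^ (M : ℕ) := by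
  obtain ⟨C, M, hC, h⟩ := exists_norm_iteratedFDeriv_wavePacket_le g k n
  refine ⟨C, M, hC, fun z => SchwartzMap.seminorm_le_bound ℂ k n _ (by positivity) fun y => ?_⟩
  refine le_trans ?_ (h z y)
  gcongr
  rw [show ⇑(G z) = fun y => wavePacket g (z, y) from funext (hG z),
    iteratedFDeriv_wavePacket_right]
  exact norm_compContinuousLinearMap_inr_le _

theorem continuous_wavePacket {d : ℕ} (g : SCH d) {G : P d → SCH d}
    (hG : ∀ z y, G z y = wavePacket g (z, y)) : Continuous G := by
  rw [continuous_iff_continuousAt]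
  intro z₀
  rw [ContinuousAt, (schwartz_withSeminorms ℂ (E d) ℂ).tendsto_nhds]
  rintro ⟨k, n⟩ ε hε
  obtain ⟨C, M, hC, h⟩ := exists_norm_iteratedFDeriv_wavePacket_le g k (n + 1)
  set D := C * (1 + (‖z₀‖ + 1)) ^ M with hD
  have hD0 : 0 ≤ D := by positivity
  have hlip : ∀ z ∈ Metric.closedBall z₀ 1,
      SchwartzMap.seminorm ℂ k n (G z - G z₀) ≤ D * ‖z - z₀‖ := by
    intro z hz
    refine SchwartzMap.seminorm_le_bound ℂ k n _ (by positivity) fun y => ?_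
    have hdiff : ∀ w : P d, HasFDerivWithinAt
        (fun w => ‖y‖ ^ k • iteratedFDeriv ℝ n (wavePacket g) (w, y))
        (‖y‖ ^ k • (fderiv ℝ (iteratedFDeriv ℝ n (wavePacket g)) (w, y)).comp
          (ContinuousLinearMap.inl ℝ (P d) (E d))) (Metric.closedBall z₀ 1) w := by
      intro w
      have h1 : DifferentiableAt ℝ (iteratedFDeriv ℝ n (wavePacket g)) (w, y) :=
        (contDiff_wavePacket g).differentiable_iteratedFDeriv (m := n)
          (by exact_mod_cast WithTop.coe_lt_top n) _
      have h2 : HasFDerivAt (fun w : P d => iteratedFDeriv ℝ n (wavePacket g) (w, y))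
          ((fderiv ℝ (iteratedFDeriv ℝ n (wavePacket g)) (w, y)).comp
            (ContinuousLinearMap.inl ℝ (P d) (E d))) w :=
        HasFDerivAt.comp (g := iteratedFDeriv ℝ n (wavePacket g)) (f := fun w => (w, y)) w
          h1.hasFDerivAt (hasFDerivAt_prodMk_left (𝕜 := ℝ) w y)
      exact (h2.const_smul (‖y‖ ^ k)).hasFDerivWithinAt
    have hmv := (convex_closedBall z₀ (1 : ℝ)).norm_image_sub_le_of_norm_hasFDerivWithin_le
      (C := D) (fun w _ => hdiff w) (fun w hw => by
        rw [norm_smul, norm_pow, norm_norm]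
        calc _ ≤ ‖y‖ ^ k * (‖fderiv ℝ (iteratedFDeriv ℝ n (wavePacket g)) (w, y)‖ * 1) := by
              gcongr
              refine (ContinuousLinearMap.opNorm_comp_le _ _).trans ?_
              gcongr
              exact ContinuousLinearMap.norm_inl_le_one ℝ (P d) (E d)
          _ ≤ C * (1 + ‖w‖) ^ M := by
              rw [mul_one, norm_fderiv_iteratedFDeriv]
              exact h w y
          _ ≤ D := by
              rw [hD]
              gcongr
              have h2 : ‖w - z₀‖ ≤ 1 := by simpa [dist_eq_norm] using hw
              have h3 : ‖w‖ ≤ ‖z₀‖ + ‖w - z₀‖ := by simpa using norm_add_le z₀ (w - z₀)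
              linarith)
      (Metric.mem_closedBall_self zero_le_one) hz
    refine le_trans ?_ hmv
    rw [← smul_sub, norm_smul, norm_pow, norm_norm]
    gcongr
    have hsub : iteratedFDeriv ℝ n (⇑(G z - G z₀)) y =
        iteratedFDeriv ℝ n (G z) y - iteratedFDeriv ℝ n (G z₀) y :=
      iteratedFDeriv_sub_apply (((G z).smooth n).contDiffAt) (((G z₀).smooth n).contDiffAt)
    rw [hsub, show ⇑(G z) = fun y => wavePacket g (z, y) from funext (hG z),
      show ⇑(G z₀) = fun y => wavePacket g (z₀, y) from funext (hG z₀),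
      iteratedFDeriv_wavePacket_right, iteratedFDeriv_wavePacket_right]
    exact norm_compContinuousLinearMap_inr_le
      (iteratedFDeriv ℝ n (wavePacket g) (z, y) - iteratedFDeriv ℝ n (wavePacket g) (z₀, y))
  have ht : Filter.Tendsto (fun z => D * ‖z - z₀‖) (nhds z₀) (nhds 0) := by
    have : Continuous fun z : P d => D * ‖z - z₀‖ := by fun_prop
    simpa using this.tendsto z₀
  filter_upwards [ht.eventually (gt_mem_nhds hε), Metric.closedBall_mem_nhds z₀ one_pos]
    with z h1 h2
  exact (hlip z h2).trans_lt h1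

/-- The product of `f` with the translate of `γ` by `x`. -/
def mulTranslate {d : ℕ} (f γ : SCH d) (x : E d) : SCH d :=
  SchwartzMap.pairing (ContinuousLinearMap.mul ℂ ℂ) f (SchwartzMap.compSubConstCLM ℂ x γ)

theorem mulTranslate_apply {d : ℕ} (f γ : SCH d) (x y : E d) :
    mulTranslate f γ x y = f y * γ (y - x) := rfl

/-- The short-time Fourier transform of `f` whose window is the complex conjugate of `γ`. -/
def stft {d : ℕ} (f γ : SCH d) (z : P d) : ℂ :=
  ∫ y, f y * wavePacket γ ((z.1, -z.2), y)

theorem exists_seminorm_mulTranslate_le {d : ℕ} (f γ : SCH d) (k n l : ℕ) :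
    ∃ C, ∀ x, (1 + ‖x‖) ^ l * SchwartzMap.seminorm ℂ k n (mulTranslate f γ x) ≤ C := by
  obtain ⟨C₁, hC₁, h₁⟩ := f.exists_one_add_norm_pow_mul_le (k + l) n
  obtain ⟨C₂, hC₂, h₂⟩ := γ.exists_one_add_norm_pow_mul_le l n
  refine ⟨∑ i ∈ Finset.range (n + 1), (n.choose i : ℝ) * (C₁ * C₂), fun x => ?_⟩
  rw [← le_div_iff₀' (by positivity)]
  refine SchwartzMap.seminorm_le_bound ℂ k n _ (by positivity) fun y => ?_
  rw [le_div_iff₀' (by positivity)]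
  have hleib := norm_iteratedFDeriv_mul_le (f.smooth ⊤)
    ((γ.smooth ⊤).comp (contDiff_id.sub contDiff_const)) y (n := n)
    (by exact_mod_cast le_top) (g := fun y => γ (y - x))
  have hx : 1 + ‖x‖ ≤ (1 + ‖y‖) * (1 + ‖y - x‖) := by
    rw [norm_sub_rev]
    exact one_add_norm_le_mul x y
  calc (1 + ‖x‖) ^ l * (‖y‖ ^ k * ‖iteratedFDeriv ℝ n (mulTranslate f γ x) y‖)
      ≤ ((1 + ‖y‖) * (1 + ‖y - x‖)) ^ l * ((1 + ‖y‖) ^ k *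
          ∑ i ∈ Finset.range (n + 1), (n.choose i : ℝ) * ‖iteratedFDeriv ℝ i f y‖ *
            ‖iteratedFDeriv ℝ (n - i) (fun y => γ (y - x)) y‖) := by
        refine mul_le_mul (by gcongr) (mul_le_mul ?_ hleib (by positivity) (by positivity))
          (by positivity) (by positivity)
        gcongr
        linarith
    _ = ∑ i ∈ Finset.range (n + 1), (n.choose i : ℝ) *
          (((1 + ‖y‖) ^ (k + l) * ‖iteratedFDeriv ℝ i f y‖) *
            ((1 + ‖y - x‖) ^ l * ‖iteratedFDeriv ℝ (n - i) γ (y - x)‖)) := by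
        rw [Finset.mul_sum, Finset.mul_sum]
        refine Finset.sum_congr rfl fun i _ => ?_
        rw [iteratedFDeriv_comp_sub, mul_pow, pow_add]
        ring
    _ ≤ _ := by
        refine Finset.sum_le_sum fun i hi => mul_le_mul_of_nonneg_left ?_ (by positivity)
        exact mul_le_mul (h₁ i (by simpa [Nat.lt_succ_iff] using hi) y)
          (h₂ _ (Nat.sub_le _ _) _) (by positivity) hC₁

theorem exists_one_add_norm_pow_mul_fourier_le (d N : ℕ) :
    ∃ (s : Finset (ℕ × ℕ)) (C : ℝ), 0 ≤ C ∧ ∀ (h : SCH d) (ξ : E d),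
      (1 + ‖ξ‖) ^ N * ‖FourierTransform.fourier h ξ‖ ≤
        C * ∑ p ∈ s, SchwartzMap.seminorm ℂ p.1 p.2 h := by
  set q : Seminorm ℂ (SCH d) := (Finset.Iic (N, 0)).sup
    fun m : ℕ × ℕ => SchwartzMap.seminorm ℂ m.1 m.2 with hq
  have hqc : Continuous q :=
    Finset.sup_induction (p := fun q : Seminorm ℂ (SCH d) => Continuous q) continuous_zero
      (fun _ ha _ hb => ha.sup hb)
      fun i _ => (schwartz_withSeminorms ℂ (E d) ℂ).continuous_seminorm i
  obtain ⟨s, C, -, h⟩ := Seminorm.bound_of_continuous (schwartz_withSeminorms ℂ (E d) ℂ)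
    (q.comp (SchwartzMap.fourierTransformCLM ℂ : SCH d →L[ℂ] SCH d).toLinearMap)
    (hqc.comp (SchwartzMap.fourierTransformCLM ℂ : SCH d →L[ℂ] SCH d).continuous)
  refine ⟨s, 2 ^ N * C, by positivity, fun u ξ => ?_⟩
  have h1 := SchwartzMap.one_add_le_sup_seminorm_apply (𝕜 := ℂ) (m := (N, 0)) le_rfl le_rfl
    (FourierTransform.fourier u) ξ
  rw [norm_iteratedFDeriv_zero] at h1
  refine h1.trans ?_
  rw [mul_assoc]
  refine mul_le_mul_of_nonneg_left ((h u).trans ?_) (by positivity)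
  rw [smul_apply, NNReal.smul_def, smul_eq_mul]
  refine mul_le_mul_of_nonneg_left ?_ C.2
  refine (Seminorm.finset_sup_le_sum _ s u).trans_eq ?_
  rw [sum_apply]
  rfl

theorem stft_eq_fourier {d : ℕ} (f γ : SCH d) (z : P d) :
    stft f γ z = FourierTransform.fourier (mulTranslate f γ z.1) ((2 * π)⁻¹ • z.2) := by
  rw [SchwartzMap.fourier_coe, Real.fourier_eq', stft]
  congr 1
  funext y
  rw [mulTranslate_apply, wavePacket, smul_eq_mul, real_inner_smul_right, inner_neg_right,
    show -2 * π * ((2 * π)⁻¹ * ⟪y, z.2⟫) = -⟪y, z.2⟫ by field_simp]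
  rw [mul_comm I]
  ring

theorem exists_one_add_norm_pow_mul_stft_le {d : ℕ} (f γ : SCH d) (N : ℕ) :
    ∃ C, 0 ≤ C ∧ ∀ z, (1 + ‖z‖) ^ N * ‖stft f γ z‖ ≤ C := by
  obtain ⟨s, C, hC, h⟩ := exists_one_add_norm_pow_mul_fourier_le d N
  choose D hD using fun p : ℕ × ℕ => exists_seminorm_mulTranslate_le f γ p.1 p.2 N
  have key : ∀ z, (1 + ‖z‖) ^ N * ‖stft f γ z‖ ≤ (2 * π) ^ N * (C * ∑ p ∈ s, D p) := by
    intro z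
    have h2π : 1 ≤ 2 * π := by linarith [Real.pi_gt_three]
    have hz2 : 1 + ‖z.2‖ ≤ 2 * π * (1 + ‖(2 * π)⁻¹ • z.2‖) := by
      rw [norm_smul, Real.norm_of_nonneg (by positivity), mul_add, ← mul_assoc,
        mul_inv_cancel₀ (by positivity)]
      linarith
    have hz : 1 + ‖z‖ ≤ 2 * π * ((1 + ‖z.1‖) * (1 + ‖(2 * π)⁻¹ • z.2‖)) := by
      have h3 : 1 + ‖z‖ ≤ (1 + ‖z.1‖) * (1 + ‖z.2‖) := by
        have := max_le_add_of_nonneg (norm_nonneg z.1) (norm_nonneg z.2)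
        rw [Prod.norm_def]
        nlinarith [norm_nonneg z.1, norm_nonneg z.2]
      calc _ ≤ _ := h3
        _ ≤ (1 + ‖z.1‖) * (2 * π * (1 + ‖(2 * π)⁻¹ • z.2‖)) := by gcongr
        _ = _ := by ring
    calc (1 + ‖z‖) ^ N * ‖stft f γ z‖
        ≤ (2 * π * ((1 + ‖z.1‖) * (1 + ‖(2 * π)⁻¹ • z.2‖))) ^ N * ‖stft f γ z‖ := by gcongr
      _ = (2 * π) ^ N * ((1 + ‖z.1‖) ^ N * ((1 + ‖(2 * π)⁻¹ • z.2‖) ^ N * ‖stft f γ z‖)) := by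
          rw [mul_pow, mul_pow _ (1 + _)]; ring
      _ ≤ (2 * π) ^ N * ((1 + ‖z.1‖) ^ N * (C * ∑ p ∈ s,
            SchwartzMap.seminorm ℂ p.1 p.2 (mulTranslate f γ z.1))) := by
          rw [stft_eq_fourier]
          have := h (mulTranslate f γ z.1) ((2 * π)⁻¹ • z.2)
          gcongr
      _ = (2 * π) ^ N * (C * ∑ p ∈ s, (1 + ‖z.1‖) ^ N *
            SchwartzMap.seminorm ℂ p.1 p.2 (mulTranslate f γ z.1)) := by
          rw [← Finset.mul_sum]; ring
      _ ≤ _ := by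
          gcongr with p hp
          exact hD p z.1
  exact ⟨_, (by positivity : (0 : ℝ) ≤ (1 + ‖(0 : P d)‖) ^ N * ‖stft f γ 0‖).trans (key 0), key⟩

theorem continuous_stft {d : ℕ} (f γ : SCH d) : Continuous (stft f γ) := by
  obtain ⟨B, -, hB⟩ := γ.exists_one_add_norm_pow_mul_le 0 0
  have hb : ∀ y, ‖γ y‖ ≤ B := fun y => by simpa using hB 0 le_rfl y
  refine continuous_of_dominated (bound := fun y => ‖f y‖ * B) (fun z => ?_)
    (fun z => Filter.Eventually.of_forall fun y => ?_) (f.integrable.norm.mul_const B)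
    (Filter.Eventually.of_forall fun y => ?_)
  · have := (contDiff_wavePacket γ).continuous
    exact (f.continuous.mul (this.comp (by fun_prop))).aestronglyMeasurable
  · rw [norm_mul, wavePacket, norm_mul, mul_comm I, Complex.norm_exp_ofReal_mul_I, one_mul]
    gcongr
    exact hb _
  · exact continuous_const.mul ((contDiff_wavePacket γ).continuous.comp (by fun_prop))

theorem integrable_norm_stft_mul {d : ℕ} (f γ : SCH d) {φ : P d → ℝ} {C : ℝ} {M : ℕ}
    (hφ : AEStronglyMeasurable φ) (h : ∀ z, ‖φ z‖ ≤ C * (1 + ‖z‖) ^ M) :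
    Integrable fun z => ‖stft f γ z‖ * φ z := by
  set N := Module.finrank ℝ (P d) + 1 with hN
  obtain ⟨D, hD, h'⟩ := exists_one_add_norm_pow_mul_stft_le f γ (M + N)
  have hintg : Integrable (fun z : P d => (1 + ‖z‖) ^ (-(N : ℝ))) :=
    integrable_one_add_norm (μ := (volume : Measure (E d)).prod volume) (by
      rw [hN]; push_cast; linarith)
  refine (hintg.const_mul (C * D)).mono'
    ((continuous_stft f γ).norm.aestronglyMeasurable.mul hφ)
    (Filter.Eventually.of_forall fun z => ?_)
  have hp : 0 < 1 + ‖z‖ := by positivity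
  rw [norm_mul, norm_norm, Real.rpow_neg hp.le, Real.rpow_natCast, ← div_eq_mul_inv,
    le_div_iff₀ (by positivity)]
  have hC : 0 ≤ C := by
    have := (norm_nonneg _).trans (h z)
    exact nonneg_of_mul_nonneg_left this (by positivity)
  calc ‖stft f γ z‖ * ‖φ z‖ * (1 + ‖z‖) ^ N
      ≤ ‖stft f γ z‖ * (C * (1 + ‖z‖) ^ M) * (1 + ‖z‖) ^ N := by gcongr; exact h z
    _ = C * ((1 + ‖z‖) ^ (M + N) * ‖stft f γ z‖) := by rw [pow_add]; ring
    _ ≤ C * D := by gcongr; exact h' z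

theorem integral_stft_mul_cexp {d : ℕ} (f γ : SCH d) (x y : E d) :
    ∫ ξ, stft f γ (x, ξ) * Complex.exp (I * ((⟪y, ξ⟫ : ℝ) : ℂ)) =
      (2 * π : ℝ) ^ d * (f y * γ (y - x)) := by
  have hinv : mulTranslate f γ x y = ∫ ξ, Complex.exp (((2 * π * ⟪ξ, y⟫ : ℝ) : ℂ) * I) *
      FourierTransform.fourier (mulTranslate f γ x) ξ := by
    conv_lhs => rw [← FourierTransform.fourierInv_fourier_eq (F := SCH d) (mulTranslate f γ x)]
    rw [SchwartzMap.fourierInv_coe, Real.fourierInv_eq']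
    rfl
  have hscale := Measure.integral_comp_smul (volume : Measure (E d))
    (fun ξ => Complex.exp (((2 * π * ⟪ξ, y⟫ : ℝ) : ℂ) * I) *
      FourierTransform.fourier (mulTranslate f γ x) ξ) (2 * π)⁻¹
  rw [← hinv, mulTranslate_apply, finrank_euclideanSpace_fin, inv_pow, inv_inv,
    abs_of_nonneg (by positivity), Complex.real_smul] at hscale
  push_cast at hscale ⊢
  rw [← hscale]
  refine integral_congr_ae (Filter.Eventually.of_forall fun ξ => ?_)
  simp only
  rw [stft_eq_fourier, real_inner_smul_left, real_inner_comm, mul_comm (Complex.exp _), mul_comm I]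
  congr 3
  push_cast
  field_simp

theorem integral_stft_mul_wavePacket {d : ℕ} (f γ g : SCH d) (y : E d) :
    ∫ z, stft f γ z * wavePacket g (z, y) =
      ((2 * π : ℝ) ^ d * ∫ u, γ u * g u) * f y := by
  obtain ⟨B, -, hB⟩ := g.exists_one_add_norm_pow_mul_le 0 0
  have hb : ∀ y, ‖g y‖ ≤ B := fun y => by simpa using hB 0 le_rfl y
  have hintg : Integrable (fun z : P d => stft f γ z * wavePacket g (z, y)) := by
    have hm : Continuous fun z : P d => wavePacket g (z, y) :=
      (contDiff_wavePacket g).continuous.comp (by fun_prop)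
    have := integrable_norm_stft_mul f γ (φ := fun z => ‖wavePacket g (z, y)‖) (C := B) (M := 0)
      hm.norm.aestronglyMeasurable fun z => by
        rw [norm_norm, wavePacket, norm_mul, mul_comm I, Complex.norm_exp_ofReal_mul_I, one_mul,
          pow_zero, mul_one]
        exact hb _
    refine this.mono' ((continuous_stft f γ).mul hm).aestronglyMeasurable
      (Filter.Eventually.of_forall fun z => (norm_mul _ _).le)
  rw [Measure.volume_eq_prod, integral_prod _ hintg]
  calc ∫ x, ∫ ξ, stft f γ (x, ξ) * wavePacket g ((x, ξ), y)
      = ∫ x, (2 * π : ℝ) ^ d * (f y * γ (y - x)) * g (y - x) := by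
        refine integral_congr_ae (Filter.Eventually.of_forall fun x => ?_)
        simp only [wavePacket, ← mul_assoc]
        rw [integral_mul_const, integral_stft_mul_cexp]
        ring
    _ = ∫ x, ((2 * π : ℝ) ^ d * f y) * (fun u => γ u * g u) (y - x) := by
        simp only [mul_assoc]
    _ = _ := by
        rw [integral_const_mul, integral_sub_left_eq_self (fun u => γ u * g u) volume y]
        ring

theorem SchwartzMap.apply_eq_integral_stft {d : ℕ} (γ g : SCH d) {G : P d → SCH d}
    (hG : ∀ z y, G z y = wavePacket g (z, y)) (hγ : ∫ u, γ u * g u ≠ 0)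
    (L : SCH d →L[ℂ] ℂ) (f : SCH d) :
    L f = ((2 * π : ℝ) ^ d * ∫ u, γ u * g u)⁻¹ * ∫ z, stft f γ z * L (G z) := by
  set c : ℂ := (2 * π : ℝ) ^ d * ∫ u, γ u * g u with hc
  have hc0 : c ≠ 0 := mul_ne_zero (pow_ne_zero _ (by exact_mod_cast Real.two_pi_pos.ne')) hγ
  have hcont := continuous_wavePacket g hG
  have := SchwartzMap.apply_eq_integral (μ := volume) hcont
    (continuous_stft f γ).aestronglyMeasurable (fun k n => by
      obtain ⟨C, M, hC, h⟩ := exists_seminorm_wavePacket_le g hG k n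
      refine integrable_norm_stft_mul f γ (C := C) (M := M)
        (((schwartz_withSeminorms ℂ (E d) ℂ).continuous_seminorm (k, n)).comp
          hcont).aestronglyMeasurable fun z => ?_
      rw [Real.norm_of_nonneg (apply_nonneg _ _)]
      exact h z) (f := c • f) (fun y => by
        simp only [hG, smul_eq_mul]
        rw [integral_stft_mul_wavePacket]
        rfl) L
  rw [← this, map_smul, smul_eq_mul, inv_mul_cancel_left₀ hc0]

/-- **Schur's test** on `L^p`. -/
theorem eLpNorm_le_of_enorm_le_lintegral_kernel {α β F G : Type*} [MeasurableSpace α]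
    [MeasurableSpace β] [NormedAddCommGroup F] [NormedAddCommGroup G] {μ : Measure α}
    {ν : Measure β} [SFinite μ] [SFinite ν] {K : α → β → ℝ≥0∞} (hK : Measurable (Function.uncurry K))
    {B c : ℝ≥0∞} (h₁ : ∀ w, ∫⁻ z, K w z ∂ν ≤ B) (h₂ : ∀ z, ∫⁻ w, K w z ∂μ ≤ B)
    {u : α → F} {v : β → G} (hv : AEStronglyMeasurable v ν)
    (huv : ∀ w, ‖u w‖ₑ ≤ c * ∫⁻ z, K w z * ‖v z‖ₑ ∂ν) {p : ℝ≥0∞} (hp : 1 ≤ p) :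
    eLpNorm u p μ ≤ c * B * eLpNorm v p ν := by
  have hKw : ∀ w, Measurable (K w) := fun w => hK.comp measurable_prodMk_left
  rcases eq_or_ne p ∞ with rfl | hp'
  · simp only [eLpNorm_exponent_top]
    refine eLpNormEssSup_le_of_ae_enorm_bound (Filter.Eventually.of_forall fun w => ?_)
    calc ‖u w‖ₑ ≤ c * ∫⁻ z, K w z * ‖v z‖ₑ ∂ν := huv w
      _ ≤ c * ∫⁻ z, K w z * eLpNormEssSup v ν ∂ν := by
          refine mul_le_mul_right (lintegral_mono_ae ?_) c
          filter_upwards [enorm_ae_le_eLpNormEssSup v ν] with z hz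
          gcongr
      _ = c * (∫⁻ z, K w z ∂ν) * eLpNormEssSup v ν := by
          rw [lintegral_mul_const _ (hKw w), mul_assoc]
      _ ≤ _ := by
          gcongr
          exact h₁ w
  · have hp0 : p ≠ 0 := (zero_lt_one.trans_le hp).ne'
    set q := p.toReal with hq
    have hq1 : 1 ≤ q := by simpa using ENNReal.toReal_mono hp' hp
    have hq0 : 0 < q := by linarith
    have hvm : AEMeasurable (fun z => ‖v z‖ₑ ^ q) ν := hv.enorm.pow_const _
    have jensen : ∀ w, ∫⁻ z, K w z * ‖v z‖ₑ ∂ν ≤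
        (∫⁻ z, K w z * ‖v z‖ₑ ^ q ∂ν) ^ (1 / q) * B ^ (1 - 1 / q) := by
      intro w
      have hvw : AEStronglyMeasurable v (ν.withDensity (K w)) :=
        hv.mono_ac (withDensity_absolutelyContinuous _ _)
      have := eLpNorm_le_eLpNorm_mul_rpow_measure_univ hp hvw
      rw [eLpNorm_one_eq_lintegral_enorm, eLpNorm_eq_lintegral_rpow_enorm_toReal hp0 hp',
        lintegral_withDensity_eq_lintegral_mul₀ (hKw w).aemeasurable hv.enorm,
        lintegral_withDensity_eq_lintegral_mul₀ (hKw w).aemeasurable hvm,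
        withDensity_apply _ MeasurableSet.univ, Measure.restrict_univ, ENNReal.toReal_one,
        ← hq, div_one] at this
      refine this.trans ?_
      simp only [Pi.mul_apply]
      gcongr
      · rw [sub_nonneg, div_le_one hq0]
        exact hq1
      · exact h₁ w
    have hpow : ∀ w, ‖u w‖ₑ ^ q ≤ c ^ q * B ^ (q - 1) * ∫⁻ z, K w z * ‖v z‖ₑ ^ q ∂ν := by
      intro w
      calc ‖u w‖ₑ ^ q ≤ (c * ((∫⁻ z, K w z * ‖v z‖ₑ ^ q ∂ν) ^ (1 / q) * B ^ (1 - 1 / q))) ^ q := by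
            gcongr
            exact (huv w).trans (by gcongr; exact jensen w)
        _ = _ := by
            rw [ENNReal.mul_rpow_of_nonneg _ _ hq0.le, ENNReal.mul_rpow_of_nonneg _ _ hq0.le,
              ← ENNReal.rpow_mul, ← ENNReal.rpow_mul, one_div_mul_cancel hq0.ne',
              ENNReal.rpow_one, sub_mul, one_mul, one_div_mul_cancel hq0.ne']
            ring
    have hintg : ∫⁻ w, ‖u w‖ₑ ^ q ∂μ ≤ (c * B) ^ q * ∫⁻ z, ‖v z‖ₑ ^ q ∂ν := by
      have hm : AEMeasurable (Function.uncurry fun w z => K w z * ‖v z‖ₑ ^ q) (μ.prod ν) :=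
        hK.aemeasurable.mul (hvm.comp_quasiMeasurePreserving Measure.quasiMeasurePreserving_snd)
      calc ∫⁻ w, ‖u w‖ₑ ^ q ∂μ
          ≤ ∫⁻ w, c ^ q * B ^ (q - 1) * ∫⁻ z, K w z * ‖v z‖ₑ ^ q ∂ν ∂μ := lintegral_mono hpow
        _ = c ^ q * B ^ (q - 1) * ∫⁻ w, ∫⁻ z, K w z * ‖v z‖ₑ ^ q ∂ν ∂μ :=
            lintegral_const_mul'' _ hm.lintegral_prod_right'
        _ = c ^ q * B ^ (q - 1) * ∫⁻ z, ∫⁻ w, K w z * ‖v z‖ₑ ^ q ∂μ ∂ν := by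
            rw [lintegral_lintegral_swap hm]
        _ ≤ c ^ q * B ^ (q - 1) * ∫⁻ z, B * ‖v z‖ₑ ^ q ∂ν := by
            gcongr with z
            rw [lintegral_mul_const _ (hK.of_uncurry_right (y := z))]
            gcongr
            exact h₂ z
        _ = (c * B) ^ q * ∫⁻ z, ‖v z‖ₑ ^ q ∂ν := by
            rw [lintegral_const_mul'' _ hvm, ENNReal.mul_rpow_of_nonneg _ _ hq0.le]
            have : B ^ q = B ^ (q - 1) * B := by
              conv_lhs => rw [← sub_add_cancel q 1,
                ENNReal.rpow_add_of_nonneg _ _ (by linarith) zero_le_one, ENNReal.rpow_one]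
            rw [this]
            ring
    rw [eLpNorm_eq_lintegral_rpow_enorm_toReal hp0 hp',
      eLpNorm_eq_lintegral_rpow_enorm_toReal hp0 hp', ← hq]
    calc (∫⁻ w, ‖u w‖ₑ ^ q ∂μ) ^ (1 / q)
        ≤ ((c * B) ^ q * ∫⁻ z, ‖v z‖ₑ ^ q ∂ν) ^ (1 / q) := by gcongr
      _ = _ := by
          rw [ENNReal.mul_rpow_of_nonneg _ _ (by positivity), ← ENNReal.rpow_mul,
            mul_one_div_cancel hq0.ne', ENNReal.rpow_one]

theorem measurable_ensq {d : ℕ} : Measurable (ensq : P d → ℝ) := by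
  unfold ensq
  fun_prop

theorem ensq_neg {d : ℕ} (z : P d) : ensq (-z) = ensq z := by
  simp [ensq]

theorem norm_sq_le_ensq {d : ℕ} (z : P d) : ‖z‖ ^ 2 ≤ ensq z := by
  rw [ensq]
  rcases max_choice ‖z.1‖ ‖z.2‖ with h | h <;> rw [Prod.norm_def, h] <;>
    nlinarith [sq_nonneg ‖z.1‖, sq_nonneg ‖z.2‖]

theorem lintegral_one_add_ensq_rpow_lt_top {d : ℕ} {m : ℝ} (hm : 2 * (d : ℝ) < m) :
    ∫⁻ z : P d, ENNReal.ofReal ((1 + ensq z) ^ (-(m / 2))) < ∞ := by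
  have hfin : (Module.finrank ℝ (P d) : ℝ) < m := by
    rw [Module.finrank_prod, finrank_euclideanSpace_fin]
    push_cast
    linarith
  have hintg := integrable_rpow_neg_one_add_norm_sq
    (μ := (volume : Measure (E d)).prod (volume : Measure (E d))) hfin
  refine lt_of_le_of_lt (lintegral_mono fun z => ENNReal.ofReal_le_ofReal ?_) hintg.lintegral_lt_top
  have hm0 : 0 ≤ m := by linarith [(Nat.cast_nonneg d : (0 : ℝ) ≤ d)]
  rw [neg_div]
  exact Real.rpow_le_rpow_of_nonpos (by positivity) (by linarith [norm_sq_le_ensq z])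
    (by linarith)

instance isAddHaarMeasure_volume_phaseSpace (d : ℕ) : (volume : Measure (P d)).IsAddHaarMeasure :=
  Measure.prod.instIsAddHaarMeasure _ _

/-- if `T : 𝒮(ℝ^d) → 𝒮'(ℝ^d)` has a wave-packet matrix (with respect to the
Gaussian window `g(y) = exp(-|y|²/2)`) dominated by `A·⟨w - χ z⟩^{-m}`, `m > 2d`, where
`χ` is a measure preserving measurable bijection of `ℝ^{2d}` with measurable inverse,
then `‖V_g (T f)‖_{L^p(ℝ^{2d})} ≤ C·A·‖V_g f‖_{L^p(ℝ^{2d})}` for all `1 ≤ p ≤ ∞`, with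
`C` depending only on `m` and `d`.  Here `G z` is the wave packet `π(z)g` and `Gbar z`
its complex conjugate, both elements of `𝒮(ℝ^d)`; the pairing `⟨u, π(w)g⟩` of a tempered
distribution `u` with `π(w)g` is `u (Gbar w)`. -/
theorem stmt2 (d : ℕ) (hd : 1 ≤ d) (m : ℝ) (hm : 2 * (d : ℝ) < m) :
    ∃ C > (0 : ℝ), ∀ (G Gbar : P d → SCH d),
      (∀ (z : P d) (y : E d), G z y =
        Complex.exp (Complex.I * (⟪y, z.2⟫ : ℂ)) * Real.exp (-‖y - z.1‖ ^ 2 / 2)) →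
      (∀ (z : P d) (y : E d), Gbar z y =
        Complex.exp (-Complex.I * (⟪y, z.2⟫ : ℂ)) * Real.exp (-‖y - z.1‖ ^ 2 / 2)) →
      ∀ (χ χinv : P d → P d),
        Measurable χ → Measurable χinv →
        Function.LeftInverse χinv χ → Function.RightInverse χinv χ →
        MeasurePreserving χ volume volume →
      ∀ (T : SCH d →L[ℂ] (SCH d →L[ℂ] ℂ)) (A : ℝ), 0 ≤ A →
      (∀ z w : P d, ‖T (G z) (Gbar w)‖ ≤ A * (1 + ensq (w - χ z)) ^ (-(m / 2))) →
      ∀ p : ℝ≥0∞, 1 ≤ p → ∀ f : SCH d,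
        eLpNorm (fun w : P d => T f (Gbar w)) p volume ≤
          ENNReal.ofReal (C * A) *
            eLpNorm (fun z : P d => ∫ y, f y * Gbar z y) p volume := by
  set κ : P d → ℝ := fun u => (1 + ensq u) ^ (-(m / 2)) with hκ
  have hκ0 : ∀ u, 0 ≤ κ u := fun u =>
    Real.rpow_nonneg (by linarith [(sq_nonneg ‖u‖).trans (norm_sq_le_ensq u)]) _
  have hκm : Measurable fun u => ENNReal.ofReal (κ u) :=
    ((measurable_const.add measurable_ensq).pow_const _).ennreal_ofReal
  set B : ℝ≥0∞ := ∫⁻ u : P d, ENNReal.ofReal (κ u) with hB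
  have hBtop : B ≠ ∞ := (lintegral_one_add_ensq_rpow_lt_top hm).ne
  set c₀ : ℝ := ((2 * π) ^ d * (π / 1) ^ ((Module.finrank ℝ (E d) : ℝ) / 2))⁻¹ with hc₀
  have hc₀pos : 0 < c₀ := by positivity
  refine ⟨c₀ * (B.toReal + 1), by positivity, ?_⟩
  intro G Gbar hG hGbar χ χinv hχ _ _ _ hχm T A hA hT p hp f
  have hG0 : ∀ u, G 0 u = ((Real.exp (-‖u‖ ^ 2 / 2) : ℝ) : ℂ) := fun u => by
    rw [hG]
    simp
  have hGw : ∀ z y, G z y = wavePacket (G 0) (z, y) := fun z y => by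
    rw [wavePacket, hG0, hG]
  have hGbarw : ∀ z y, Gbar z y = wavePacket (G 0) ((z.1, -z.2), y) := fun z y => by
    rw [wavePacket, hG0, hGbar, inner_neg_right]
    push_cast
    rw [mul_neg, neg_mul]
  have hgauss : ∫ u, G 0 u * G 0 u =
      (((π / 1) ^ ((Module.finrank ℝ (E d) : ℝ) / 2) : ℝ) : ℂ) := by
    rw [← GaussianFourier.integral_rexp_neg_mul_sq_norm one_pos, ← integral_complex_ofReal]
    congr 1
    funext u
    rw [hG0, ← Complex.ofReal_mul, ← Real.exp_add]
    congr 2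
    ring
  have hstft : (fun z : P d => ∫ y, f y * Gbar z y) = stft f (G 0) := by
    funext z
    simp only [hGbarw, stft]
  rw [hstft]
  have hne : ∫ u, G 0 u * G 0 u ≠ 0 := by
    rw [hgauss]
    exact_mod_cast (by positivity : (0 : ℝ) < (π / 1) ^ ((Module.finrank ℝ (E d) : ℝ) / 2)).ne'
  have hbound : ∀ w, ‖T f (Gbar w)‖ₑ ≤ ENNReal.ofReal (c₀ * A) *
      ∫⁻ z, ENNReal.ofReal (κ (w - χ z)) * ‖stft f (G 0) z‖ₑ := by
    intro w
    have hrep := SchwartzMap.apply_eq_integral_stft (G 0) (G 0) hGw hne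
      { toLinearMap := (LinearMap.applyₗ (Gbar w)).comp
          ((ContinuousLinearMap.coeLM ℂ).comp T.toLinearMap)
        cont := (continuous_eval_const (Gbar w)).comp T.continuous } f
    rw [show ((2 * π : ℝ) ^ d * ∫ u, G 0 u * G 0 u : ℂ)⁻¹ = (c₀ : ℂ) by
      rw [hgauss, hc₀]; push_cast; rfl] at hrep
    change T f (Gbar w) = _ at hrep
    rw [hrep, enorm_mul, ENNReal.ofReal_mul hc₀pos.le, mul_assoc]
    rw [← ofReal_norm (c₀ : ℂ), Complex.norm_real, Real.norm_of_nonneg hc₀pos.le,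
      ← lintegral_const_mul' _ _ ENNReal.ofReal_ne_top]
    refine mul_le_mul_right ((enorm_integral_le_lintegral_enorm _).trans
      (lintegral_mono fun z => ?_)) _
    rw [enorm_mul, mul_comm, ← mul_assoc, ← ENNReal.ofReal_mul hA, ← ofReal_norm]
    gcongr
    exact hT z w
  calc eLpNorm (fun w : P d => T f (Gbar w)) p volume
      ≤ ENNReal.ofReal (c₀ * A) * B * eLpNorm (stft f (G 0)) p volume := by
        refine eLpNorm_le_of_enorm_le_lintegral_kernel
          (K := fun w z => ENNReal.ofReal (κ (w - χ z)))
          (hκm.comp (measurable_fst.sub (hχ.comp measurable_snd))) (fun w => ?_) (fun z => ?_)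
          (continuous_stft f (G 0)).aestronglyMeasurable hbound hp
        · rw [hχm.lintegral_comp (f := fun u => ENNReal.ofReal (κ (w - u)))
            (hκm.comp (measurable_const.sub measurable_id))]
          simp_rw [← neg_sub _ w, hκ, ensq_neg]
          exact (lintegral_sub_right_eq_self (fun u => ENNReal.ofReal (κ u)) w).le
        · exact (lintegral_sub_right_eq_self (fun u => ENNReal.ofReal (κ u)) (χ z)).le
    _ ≤ ENNReal.ofReal (c₀ * (B.toReal + 1) * A) * eLpNorm (stft f (G 0)) p volume := by
        refine mul_le_mul_left ?_ _
        rw [show c₀ * (B.toReal + 1) * A = c₀ * A * (B.toReal + 1) by ring,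
          ENNReal.ofReal_mul (p := c₀ * A) (by positivity)]
        refine mul_le_mul_right ?_ _
        exact (ENNReal.ofReal_toReal hBtop).symm.le.trans (ENNReal.ofReal_le_ofReal (by linarith))
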